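/- Let p : I × I → [0,∞) be a kernel that is substochastic (Σ_t p(s,t) ≤ 1 for every s ∈ I) and satisfies hypotheses (H1), (H2), (H3) and (H4). Fix z ∈ I, q ∈ (0,1), C > 0, and let b be a q-perturbation of p on Δ_z. Then for every end ω of I with ω|_{|z|} = z there exists k ≥ |z| such that for every s ∈ Δ_{ω|k} there exist c > 0 and ℓ ≥ |z| with G_b(s,t) ≥ c·G_p(e,t) for all t ∈ Δ_{ω|ℓ}; that is, the boundary value at ω of the Martin-type kernel G_b(s,·)/G_p(e,·) is strictly positive for all s sufficiently close to ω. (This is the classical content of Proposition 3.5 of the paper.) -/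

import Mathlib

open scoped ENNReal

namespace Paper

/-- Words in the two letters `α, β`: the free monoid on two generators, as `List Bool`.
The head of the list is the leftmost letter. -/
abbrev Word := List Bool

/-- Length of the longest common prefix of two lists. -/
def lcpLen : List Bool → List Bool → ℕ
  | a :: s, b :: t => if a = b then lcpLen s t + 1 else 0
  | _, _ => 0

/-- Length of the longest common suffix of two words. -/
def lcsLen (s t : Word) : ℕ := lcpLen s.reverse t.reverse

/-- The tree metric on `Word`: `d(s,t) = (|s| - k) + (|t| - k)`, `k` the length of the
longest common suffix. -/
def treeDist (s t : Word) : ℕ := (s.length - lcsLen s t) + (t.length - lcsLen s t)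

/-- The branch `Δ_x = {u x : u ∈ I}` of words having `x` as a suffix. -/
def Delta (x : Word) : Set Word := {s | x <:+ s}

/-- The geodesic segment `[s,t] = {v : d(s,v) + d(v,t) = d(s,t)}`. -/
def geodesic (s t : Word) : Set Word := {v | treeDist s v + treeDist v t = treeDist s t}

/-- Paths of `n` steps from `s` to `t` staying in `Ω`. -/
def pathSet {X : Type*} (Ω : Set X) (n : ℕ) (s t : X) : Set (Fin (n + 1) → X) :=
  {σ | σ 0 = s ∧ σ (Fin.last n) = t ∧ ∀ i, σ i ∈ Ω}

/-- The weight `∏ a(s_i, s_{i+1})` of a path, as an extended nonnegative real. -/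
noncomputable def weightE {X : Type*} (a : X → X → ℝ) (n : ℕ) (σ : Fin (n + 1) → X) : ℝ≥0∞ :=
  ∏ i : Fin n, ENNReal.ofReal (a (σ i.castSucc) (σ i.succ))

/-- The `n`-step kernel `a⁽ⁿ⁾(s,t)` of the kernel `a` on `Ω`, with values in `[0,∞]`. -/
noncomputable def nStepE {X : Type*} (Ω : Set X) (a : X → X → ℝ) (n : ℕ) (s t : X) : ℝ≥0∞ :=
  ∑' σ : pathSet Ω n s t, weightE a n σ.1

/-- The Green kernel `G_a(s,t) = Σ_n a⁽ⁿ⁾(s,t)` of `a` on `Ω`, with values in `[0,∞]`. -/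
noncomputable def greenE {X : Type*} (Ω : Set X) (a : X → X → ℝ) (s t : X) : ℝ≥0∞ :=
  ∑' n : ℕ, nStepE Ω a n s t

/-- The weight of a path, real version (for signed kernels). -/
noncomputable def weightR {X : Type*} (a : X → X → ℝ) (n : ℕ) (σ : Fin (n + 1) → X) : ℝ :=
  ∏ i : Fin n, a (σ i.castSucc) (σ i.succ)

/-- The `n`-step kernel of a signed kernel `a` on `Ω`. -/
noncomputable def nStepR {X : Type*} (Ω : Set X) (a : X → X → ℝ) (n : ℕ) (s t : X) : ℝ :=
  ∑' σ : pathSet Ω n s t, weightR a n σ.1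

/-- The Green kernel of a signed kernel `a` on `Ω`, as a real number. -/
noncomputable def greenR {X : Type*} (Ω : Set X) (a : X → X → ℝ) (s t : X) : ℝ :=
  ∑' n : ℕ, nStepR Ω a n s t

/-- The Green kernel of `|a|`: finiteness of this expresses absolute convergence of the
series defining the Green kernel of `a`. -/
noncomputable def greenAbs {X : Type*} (Ω : Set X) (a : X → X → ℝ) (s t : X) : ℝ≥0∞ :=
  greenE Ω (fun u v => |a u v|) s t

/-- (H1): finite range `S`. -/
def H1 (p : Word → Word → ℝ) (S : ℕ) : Prop := ∀ s t, S < treeDist s t → p s t = 0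

/-- (H2): nonzero transition probabilities are bounded below by `δ₀`. -/
def H2 (p : Word → Word → ℝ) (δ₀ : ℝ) : Prop := ∀ s t, 0 < p s t → δ₀ ≤ p s t

/-- (H3): uniform irreducibility. -/
def H3 (p : Word → Word → ℝ) (δ₀ : ℝ) (K : ℕ) : Prop :=
  ∀ s t, treeDist s t = 1 → ∃ k ≤ K, ∃ u : ℕ → Word, u 0 = s ∧ u k = t ∧
    ∀ i < k, ∀ x : Word, δ₀ ≤ p (u i ++ x) (u (i + 1) ++ x)

/-- The operator `(Pf)(s) = Σ_t p(s,t) f(t)` extends to a bounded operator of norm at most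
`lam` on `ℓ²(X, m)`, expressed via the associated bilinear form on finitely supported
functions. -/
def opNormBound {X : Type*} (m : X → ℝ) (p : X → X → ℝ) (lam : ℝ) : Prop :=
  ∀ f g : X → ℝ, (Function.support f).Finite → (Function.support g).Finite →
    |∑' s, m s * g s * ∑' t, p s t * f t| ≤
      lam * Real.sqrt (∑' x, m x * f x ^ 2) * Real.sqrt (∑' x, m x * g x ^ 2)

/-- (H4): there is a weight `m` for which `P` is bounded of norm at most `lam` on `ℓ²(I,m)`. -/
def H4 (p : Word → Word → ℝ) (m : Word → ℝ) (lam : ℝ) : Prop :=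
  (∀ x, 0 < m x) ∧ opNormBound m p lam

/-- Substochasticity: `Σ_t p(s,t) ≤ 1` for every `s`. -/
def Substochastic (p : Word → Word → ℝ) : Prop :=
  ∀ s, (∑' t, ENNReal.ofReal (p s t)) ≤ 1

/-- `b` is a `q`-perturbation of `p` on `Δ_z` (with constant `C`). -/
def Perturb (p b : Word → Word → ℝ) (z : Word) (q C : ℝ) : Prop :=
  ∀ s t, s ∈ Delta z → t ∈ Delta z →
    |b s t| ≤ p s t ∧ |b s t - p s t| ≤ C * q ^ s.length

/-- The word `ω|k = ω(k-1) ω(k-2) ⋯ ω(0)` of length `k` determined by an end `ω`. -/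
def endWord (ω : ℕ → Bool) (k : ℕ) : Word := (List.range k).reverse.map ω

/-- The last-entrance kernel `M_p(s,u)`: sum over paths from `s` to `u` of length at least
one whose second-to-last point lies outside `Δ_x`. -/
noncomputable def lastEnter (p : Word → Word → ℝ) (x s u : Word) : ℝ≥0∞ :=
  ∑' m : ℕ, ∑' σ : {σ : Fin (m + 2) → Word //
      σ ∈ pathSet Set.univ (m + 1) s u ∧ σ ((Fin.last m).castSucc) ∉ Delta x},
    weightE p (m + 1) σ.1

/-- The quantum integer `[n]_q = (q⁻ⁿ - qⁿ)/(q⁻¹ - q)`. -/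
noncomputable def qInt (q : ℝ) (n : ℕ) : ℝ := (q ^ (-(n : ℤ)) - q ^ (n : ℤ)) / (q⁻¹ - q)

/-- The lengths of the blocks in the canonical factorization of a word into maximal
alternating subwords. -/
def blockLens : Word → List ℕ
  | [] => []
  | [_] => [1]
  | a :: b :: rest =>
    match blockLens (b :: rest) with
    | [] => [1]
    | k :: ks => if a = b then 1 :: (k :: ks) else (k + 1) :: ks

/-- The quantum dimension `dim_q(x) = Π_i [|x_i| + 1]_q` over the blocks of `x`. -/
noncomputable def dimq (q : ℝ) (x : Word) : ℝ := ((blockLens x).map fun L => qInt q (L + 1)).prod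

/-- The classical dimension `dim(x) = Π_i (|x_i| + 1)` over the blocks of `x`. -/
noncomputable def dimn (x : Word) : ℝ := ((blockLens x).map fun L => (L + 1 : ℝ)).prod

/-- The involution `x ↦ x̄`: reverse the word and exchange the two letters. -/
def bar (x : Word) : Word := (x.map fun a => !a).reverse

/-- The fusion multiplicity `mᵗ_{r,s}`: the number of words `z` such that `r = r₀ z`,
`s = z̄ s₀`, `t = r₀ s₀` for some `r₀, s₀`. -/
noncomputable def fuse (r s t : Word) : ℕ :=
  {z : Word | ∃ r₀ s₀ : Word, r = r₀ ++ z ∧ s = bar z ++ s₀ ∧ t = r₀ ++ s₀}.ncard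

/-- A finitely supported probability measure on `Word`. -/
def IsProbMeasure (μ : Word → ℝ) : Prop :=
  (∀ x, 0 ≤ μ x) ∧ (Function.support μ).Finite ∧ ∑' x, μ x = 1

/-- The transition kernel `p_μ(s,t) = Σ_r μ(r) mᵗ_{r,s} dim_q(t)/(dim_q(r) dim_q(s))`. -/
noncomputable def pMu (q : ℝ) (μ : Word → ℝ) (s t : Word) : ℝ :=
  ∑' r, μ r * (fuse r s t : ℝ) * dimq q t / (dimq q r * dimq q s)

/-- The `q`-binomial coefficient. -/
noncomputable def qbinom (q : ℝ) (n k : ℕ) : ℝ :=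
  q ^ (-((k * (n - k) : ℕ) : ℤ)) *
    ∏ i ∈ Finset.range k, (1 - q ^ (2 * (n - i))) / (1 - q ^ (2 * (k - i)))

/-!
The norm bound (H4) gives `p⁽ⁿ⁾(v,v) ≤ λⁿ`, and (H3) gives Harnack inequalities for `G = G_p`. As
the walk has bounded range, it cannot cross an edge of the tree without visiting a bounded
neighbourhood of it; with the Harnack inequalities this yields Ancona's inequality
`G(s,u) ≤ A · G(s,v) · G(v,u)` for `v` on the geodesic from `s` to `u`.

A telescoping sum bounds `|G_p - G_b|(s,t)` by a multiple of `∑ᵤ θ^|u| · G(s,u) · G(u,t)`, where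
`θ < 1` is at least `q` and so close to `1` that `λ < θ ^ S`. By Ancona's inequality at the median
of `s`, `t`, `u`, this sum is at most a constant times `θ ^ lcsLen s t * G(s,t)`: the bound on `λ`
makes the sum over the `u` with a given median `v` comparable to `θ^|v|`, and `|v| ≥ lcsLen s t`.
Hence `G_b(s,t) ≥ G_p(s,t) / 2` once `s` and `t` have a long common suffix, and the Harnack
inequalities compare `G_p(s,t)` with `G_p(e,t)`.
-/

section PathSums

variable {X : Type*} {Ω : Set X} {a b p : X → X → ℝ} {n : ℕ} {s t : X}

/-- Prepending the vertex `s` to the paths of length `n` that end at `t`, wherever they start. -/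
def pathSetConsEquiv (hs : s ∈ Ω) (n : ℕ) (t : X) :
    (Σ u : X, pathSet Ω n u t) ≃ pathSet Ω (n + 1) s t where
  toFun x := ⟨Fin.cons s x.2.1, rfl, by
    rw [← Fin.succ_last, Fin.cons_succ]
    exact x.2.2.2.1, Fin.cases hs x.2.2.2.2⟩
  invFun σ := ⟨Fin.tail σ.1 0, Fin.tail σ.1, rfl, σ.2.2.1, fun i => σ.2.2.2 i.succ⟩
  left_inv := by
    rintro ⟨u, τ, rfl, h⟩
    rfl
  right_inv := by
    rintro ⟨σ, rfl, h⟩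
    exact Subtype.ext (Fin.cons_self_tail σ)

lemma tsum_pathSet_zero_one {M : Type*} [AddCommMonoid M] [TopologicalSpace M] [One M]
    [DecidableEq X] (hs : s ∈ Ω) :
    ∑' _ : pathSet Ω 0 s t, (1 : M) = if s = t then 1 else 0 := by
  split_ifs with h
  · subst h
    have : Unique (pathSet Ω 0 s s) :=
      { default := ⟨fun _ => s, rfl, rfl, fun _ => hs⟩
        uniq := fun σ => Subtype.ext <| funext fun i => by
          rw [Fin.fin_one_eq_zero i, σ.2.1] }
    rw [tsum_fintype, Fintype.sum_unique]
  · have : IsEmpty (pathSet Ω 0 s t) := ⟨fun σ => h (σ.2.1.symm.trans σ.2.2.1)⟩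
    exact tsum_empty

lemma nStepE_zero [DecidableEq X] (hs : s ∈ Ω) :
    nStepE Ω a 0 s t = if s = t then 1 else 0 :=
  tsum_pathSet_zero_one hs

lemma nStepR_zero [DecidableEq X] (hs : s ∈ Ω) :
    nStepR Ω a 0 s t = if s = t then 1 else 0 :=
  tsum_pathSet_zero_one hs

lemma nStepR_of_notMem (hs : s ∉ Ω) : nStepR Ω a n s t = 0 := by
  have : IsEmpty (pathSet Ω n s t) := ⟨fun σ => hs (σ.2.1 ▸ σ.2.2.2 0)⟩
  exact tsum_empty

lemma weightE_cons (a : X → X → ℝ) (s : X) {u : X} {τ : Fin (n + 1) → X} (hτ : τ 0 = u) :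
    weightE a (n + 1) (Fin.cons s τ : Fin (n + 2) → X) =
      ENNReal.ofReal (a s u) * weightE a n τ := by
  subst hτ
  exact Fin.prod_univ_succ _

lemma weightR_cons (a : X → X → ℝ) (s : X) {u : X} {τ : Fin (n + 1) → X} (hτ : τ 0 = u) :
    weightR a (n + 1) (Fin.cons s τ : Fin (n + 2) → X) = a s u * weightR a n τ := by
  subst hτ
  exact Fin.prod_univ_succ _

lemma nStepE_succ (hs : s ∈ Ω) :
    nStepE Ω a (n + 1) s t = ∑' u, ENNReal.ofReal (a s u) * nStepE Ω a n u t := by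
  unfold nStepE
  rw [← (pathSetConsEquiv hs n t).tsum_eq, ENNReal.tsum_sigma']
  refine tsum_congr fun u => ?_
  rw [← ENNReal.tsum_mul_left]
  exact tsum_congr fun τ => weightE_cons a s τ.2.1

lemma nStepR_succ (hs : s ∈ Ω)
    (hsum : Summable fun σ : pathSet Ω (n + 1) s t => weightR a (n + 1) σ.1) :
    nStepR Ω a (n + 1) s t = ∑' u, a s u * nStepR Ω a n u t := by
  unfold nStepR
  rw [← (pathSetConsEquiv hs n t).tsum_eq]
  refine (Summable.tsum_sigma ((pathSetConsEquiv hs n t).summable_iff.2 hsum)).trans ?_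
  refine tsum_congr fun u => ?_
  rw [← tsum_mul_left]
  exact tsum_congr fun τ => weightR_cons a s τ.2.1

lemma tsum_enorm_weightR_le (hbp : ∀ u ∈ Ω, ∀ v ∈ Ω, |b u v| ≤ p u v) :
    ∑' σ : pathSet Ω n s t, ‖weightR b n σ.1‖ₑ ≤ nStepE Set.univ p n s t := by
  have hweight (σ : pathSet Ω n s t) : ‖weightR b n σ.1‖ₑ ≤ weightE p n σ.1 := by
    unfold weightR weightE
    rw [← ofReal_norm, norm_prod, ENNReal.ofReal_prod_of_nonneg fun _ _ => norm_nonneg _]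
    gcongr with i
    exact hbp _ (σ.2.2.2 _) _ (σ.2.2.2 _)
  have hsub : pathSet Ω n s t ⊆ pathSet Set.univ n s t :=
    fun σ h => ⟨h.1, h.2.1, fun _ => trivial⟩
  exact (ENNReal.tsum_le_tsum hweight).trans (ENNReal.tsum_mono_subtype (weightE p n) hsub)

lemma enorm_nStepR_le (hbp : ∀ u ∈ Ω, ∀ v ∈ Ω, |b u v| ≤ p u v) :
    ‖nStepR Ω b n s t‖ₑ ≤ nStepE Set.univ p n s t :=
  enorm_tsum_le_tsum_enorm.trans (tsum_enorm_weightR_le hbp)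

end PathSums

section Green

variable {X : Type*} {p : X → X → ℝ}

local notation "P" => nStepE Set.univ p
local notation "G" => greenE Set.univ p

lemma tsum_mul_tsum_mul_comm {Y : Type*} (f : X → ℝ≥0∞) (g : X → Y → ℝ≥0∞) (h : Y → ℝ≥0∞) :
    ∑' u, f u * ∑' v, g u v * h v = ∑' v, (∑' u, f u * g u v) * h v := by
  simp_rw [← ENNReal.tsum_mul_left, ← ENNReal.tsum_mul_right, mul_assoc]
  exact ENNReal.tsum_comm

lemma nStepE_add (m n : ℕ) (s t : X) : P (m + n) s t = ∑' u, P m s u * P n u t := by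
  classical
  induction m generalizing s with
  | zero => simp [nStepE_zero]
  | succ m ih =>
    rw [Nat.add_right_comm]
    simp_rw [nStepE_succ (Set.mem_univ _), ih]
    exact tsum_mul_tsum_mul_comm _ _ _

lemma nStepE_le_greenE (n : ℕ) (s t : X) : P n s t ≤ G s t :=
  ENNReal.le_tsum n

lemma greenE_eq [DecidableEq X] (s t : X) :
    G s t = (if s = t then 1 else 0) + ∑' u, ENNReal.ofReal (p s u) * G u t := by
  unfold greenE
  rw [tsum_eq_zero_add' ENNReal.summable, nStepE_zero (Set.mem_univ s)]
  simp_rw [nStepE_succ (Set.mem_univ s), ← ENNReal.tsum_mul_left]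
  rw [ENNReal.tsum_comm]

lemma tsum_mul_greenE_le (s t : X) : ∑' u, ENNReal.ofReal (p s u) * G u t ≤ G s t := by
  classical
  exact le_add_self.trans_eq (greenE_eq s t).symm

lemma one_le_greenE_self (s : X) : 1 ≤ G s s := by
  classical
  rw [greenE_eq, if_pos rfl]
  exact le_self_add

lemma nStepE_mul_greenE_le (k : ℕ) (s u t : X) : P k s u * G u t ≤ G s t := by
  unfold greenE
  rw [← ENNReal.tsum_mul_left]
  calc ∑' n, P k s u * P n u t ≤ ∑' n, P (k + n) s t :=
        ENNReal.tsum_le_tsum fun n => by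
          rw [nStepE_add]
          exact ENNReal.le_tsum (f := fun u => P k s u * P n u t) u
    _ ≤ ∑' n, P n s t :=
        ENNReal.tsum_comp_le_tsum_of_injective (add_right_injective k) _

lemma greenE_mul_nStepE_le (k : ℕ) (s u t : X) : G s u * P k u t ≤ G s t := by
  unfold greenE
  rw [← ENNReal.tsum_mul_right]
  calc ∑' n, P n s u * P k u t ≤ ∑' n, P (n + k) s t :=
        ENNReal.tsum_le_tsum fun n => by
          rw [nStepE_add]
          exact ENNReal.le_tsum (f := fun u => P n s u * P k u t) u
    _ ≤ ∑' n, P n s t :=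
        ENNReal.tsum_comp_le_tsum_of_injective (add_left_injective k) _

lemma pow_le_nStepE {δ : ℝ} {k : ℕ} {w : ℕ → X} (h : ∀ i < k, δ ≤ p (w i) (w (i + 1))) :
    ENNReal.ofReal δ ^ k ≤ P k (w 0) (w k) := by
  classical
  induction k generalizing w with
  | zero => simp [nStepE_zero]
  | succ k ih =>
    calc ENNReal.ofReal δ ^ (k + 1) = ENNReal.ofReal δ * ENNReal.ofReal δ ^ k := pow_succ' _ _
      _ ≤ ENNReal.ofReal (p (w 0) (w 1)) * P k (w 1) (w (k + 1)) := by
          gcongr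
          · exact h 0 k.succ_pos
          · exact ih (w := fun i => w (i + 1)) fun i hi => h (i + 1) (Nat.succ_lt_succ hi)
      _ ≤ ∑' u, ENNReal.ofReal (p (w 0) u) * P k u (w (k + 1)) :=
          ENNReal.le_tsum (f := fun u => ENNReal.ofReal (p (w 0) u) * P k u (w (k + 1))) (w 1)
      _ = P (k + 1) (w 0) (w (k + 1)) := (nStepE_succ (Set.mem_univ _)).symm

lemma sum_range_succ_nStepE [DecidableEq X] (N : ℕ) (s t : X) :
    ∑ n ∈ Finset.range (N + 1), P n s t =
      (if s = t then 1 else 0) +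
        ∑' y, ENNReal.ofReal (p s y) * ∑ n ∈ Finset.range N, P n y t := by
  simp_rw [Finset.sum_range_succ', nStepE_zero (Set.mem_univ s), nStepE_succ (Set.mem_univ s),
    Finset.mul_sum, Summable.tsum_finsetSum fun _ _ => ENNReal.summable, add_comm]

/-- The minimum principle: a superharmonic function that dominates a multiple of `G(·,t)` wherever
a step may leave `A`, and at `t` itself, dominates it on all of `A`. -/
lemma const_mul_greenE_le_of_superharmonic {c : ℝ≥0∞} {t : X} {h : X → ℝ≥0∞} {A : Set X}
    (hh : ∀ s, ∑' y, ENNReal.ofReal (p s y) * h y ≤ h s)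
    (hA : ∀ s ∈ A, c * G s t ≤ h s ∨ s ≠ t ∧ ∀ y, p s y ≠ 0 → y ∈ A) {s : X} (hs : s ∈ A) :
    c * G s t ≤ h s := by
  classical
  have partial_le (N : ℕ) : ∀ s ∈ A, c * ∑ n ∈ Finset.range N, P n s t ≤ h s := by
    induction N with
    | zero => simp
    | succ N ih =>
      intro s hs
      rcases hA s hs with hle | ⟨hst, hstep⟩
      · exact (mul_le_mul_right (ENNReal.sum_le_tsum _) c).trans hle
      · calc c * ∑ n ∈ Finset.range (N + 1), P n s t
            = ∑' y, ENNReal.ofReal (p s y) * (c * ∑ n ∈ Finset.range N, P n y t) := by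
              simp_rw [sum_range_succ_nStepE, if_neg hst, zero_add, mul_left_comm _ c,
                ENNReal.tsum_mul_left]
          _ ≤ ∑' y, ENNReal.ofReal (p s y) * h y := by
              refine ENNReal.tsum_le_tsum fun y => ?_
              by_cases hy : p s y = 0
              · simp [hy]
              · exact mul_le_mul_right (ih y (hstep y hy)) _
          _ ≤ h s := hh s
  unfold greenE
  rw [← ENNReal.tsum_mul_left]
  refine ENNReal.tsum_le_of_sum_range_le fun N => ?_
  rw [← Finset.mul_sum]
  exact partial_le N s hs

lemma greenE_mul_greenE_le (s v t : X) : G s v * G v t ≤ G v v * G s t := by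
  rw [mul_comm (G s v)]
  refine const_mul_greenE_le_of_superharmonic (h := fun s => G v v * G s t) (A := Set.univ)
    (fun s => ?_) (fun s _ => ?_) trivial
  · simp_rw [mul_left_comm _ (G v v), ENNReal.tsum_mul_left]
    gcongr
    exact tsum_mul_greenE_le s t
  · by_cases h : s = v
    · subst h
      exact Or.inl (mul_comm _ _).le
    · exact Or.inr ⟨h, fun _ _ => trivial⟩

/-- If the walk cannot leave `A`, nor reach `t`, without visiting the points `g i`, then `G(·,t)`
factors on `A` through these points. -/
lemma greenE_le_sum_of_cut {ι : Type*} {B : Finset ι} {g : ι → X} {A : Set X} {t : X}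
    (hA : ∀ s ∈ A, (∃ i ∈ B, g i = s) ∨ s ≠ t ∧ ∀ y, p s y ≠ 0 → y ∈ A) {s : X} (hs : s ∈ A) :
    G s t ≤ ∑ i ∈ B, G s (g i) * G (g i) t := by
  rw [← one_mul (G s t)]
  refine const_mul_greenE_le_of_superharmonic (h := fun s => ∑ i ∈ B, G s (g i) * G (g i) t)
    (fun s => ?_) (fun s hs => (hA s hs).imp_left ?_) hs
  · simp_rw [Finset.mul_sum, Summable.tsum_finsetSum fun _ _ => ENNReal.summable, ← mul_assoc,
      ENNReal.tsum_mul_right]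
    gcongr
    exact tsum_mul_greenE_le s _
  · rintro ⟨i, hi, rfl⟩
    calc 1 * G (g i) t ≤ G (g i) (g i) * G (g i) t := by gcongr; exact one_le_greenE_self _
      _ ≤ ∑ j ∈ B, G (g i) (g j) * G (g j) t :=
        Finset.single_le_sum (f := fun j => G (g i) (g j) * G (g j) t) (fun _ _ => zero_le) hi

lemma greenE_self_le_of_nStepE_le {L : ℝ≥0∞} {v : X} (hL : ∀ n, P n v v ≤ L ^ n) :
    G v v ≤ (1 - L)⁻¹ := by
  rw [← ENNReal.tsum_geometric]
  exact ENNReal.tsum_le_tsum hL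

end Green

section Perturbation

variable {X : Type*} {Ω : Set X} {p b : X → X → ℝ} {e : X → ℝ≥0∞} {n : ℕ} {s t : X}

local notation "P" => nStepE Set.univ p
local notation "G" => greenE Set.univ p
local notation "B" => nStepR Ω b

lemma tsum_sum_antidiagonal (f : ℕ × ℕ → ℝ≥0∞) :
    ∑' n, ∑ ij ∈ Finset.HasAntidiagonal.antidiagonal n, f ij = ∑' i, ∑' j, f (i, j) := by
  rw [← ENNReal.tsum_prod (f := fun i j => f (i, j)),
    ← Finset.HasAntidiagonal.sigmaAntidiagonalEquivProd.tsum_eq, ENNReal.tsum_sigma']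
  exact tsum_congr fun n => (Finset.tsum_subtype (Finset.HasAntidiagonal.antidiagonal n) f).symm

lemma hasSum_toReal_tsum {ι : Type*} {f : ι → ℝ≥0∞} (h : ∑' i, f i ≠ ∞) :
    HasSum (fun i => (f i).toReal) (∑' i, f i).toReal := by
  rw [ENNReal.tsum_toReal_eq (ENNReal.ne_top_of_tsum_ne_top h)]
  exact ENNReal.hasSum_toReal h

lemma summable_mul_nStepR (hbp : ∀ u ∈ Ω, ∀ v ∈ Ω, |b u v| ≤ p u v) (hs : s ∈ Ω)
    (hfin : P (n + 1) s t ≠ ∞) : Summable fun u => b s u * B n u t := by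
  refine Summable.of_enorm (ne_top_of_le_ne_top hfin ?_)
  rw [nStepE_succ (Set.mem_univ s)]
  refine ENNReal.tsum_le_tsum fun u => ?_
  by_cases hu : u ∈ Ω
  · rw [enorm_mul, Real.enorm_eq_ofReal_abs]
    exact mul_le_mul' (ENNReal.ofReal_le_ofReal (hbp s hs u hu)) (enorm_nStepR_le hbp)
  · simp [nStepR_of_notMem hu]

lemma hasSum_toReal_nStepE_succ (hp : ∀ u v, 0 ≤ p u v) (hfin : P (n + 1) s t ≠ ∞) :
    HasSum (fun u => p s u * (P n u t).toReal) (P (n + 1) s t).toReal := by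
  rw [nStepE_succ (Set.mem_univ s)] at hfin ⊢
  simpa only [ENNReal.toReal_mul, ENNReal.toReal_ofReal (hp s _)] using hasSum_toReal_tsum hfin

lemma enorm_nStepE_succ_sub_le (hp : ∀ u v, 0 ≤ p u v)
    (hbp : ∀ u ∈ Ω, ∀ v ∈ Ω, |b u v| ≤ p u v)
    (he : ∀ u ∈ Ω, ∀ v, ‖p u v - Ω.indicator (b u) v‖ₑ ≤ e u * ENNReal.ofReal (p u v))
    (hG : ∀ u, G u t ≠ ∞) (hs : s ∈ Ω) {F : X → ℝ≥0∞}
    (hF : ∀ u ∈ Ω, ‖(P n u t).toReal - B n u t‖ₑ ≤ F u) :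
    ‖(P (n + 1) s t).toReal - B (n + 1) s t‖ₑ ≤
      e s * P (n + 1) s t + ∑' u, ENNReal.ofReal (p s u) * F u := by
  have hP (k : ℕ) (u : X) : P k u t ≠ ∞ := ne_top_of_le_ne_top (hG u) (nStepE_le_greenE k u t)
  have hP_sum := hasSum_toReal_nStepE_succ hp (hP (n + 1) s)
  have hB_sum := summable_mul_nStepR hbp hs (hP (n + 1) s)
  rw [nStepR_succ hs (.of_enorm (ne_top_of_le_ne_top (hP (n + 1) s) (tsum_enorm_weightR_le hbp))),
    ← hP_sum.tsum_eq, ← hP_sum.summable.tsum_sub hB_sum, nStepE_succ (Set.mem_univ s),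
    ← ENNReal.tsum_mul_left, ← ENNReal.tsum_add]
  refine enorm_tsum_le_tsum_enorm.trans (ENNReal.tsum_le_tsum fun u => ?_)
  have hP_enorm : ‖(P n u t).toReal‖ₑ = P n u t := by
    rw [Real.enorm_eq_ofReal ENNReal.toReal_nonneg, ENNReal.ofReal_toReal (hP n u)]
  have hstep := he s hs u
  by_cases hu : u ∈ Ω
  · rw [Set.indicator_of_mem hu] at hstep
    calc ‖p s u * (P n u t).toReal - b s u * B n u t‖ₑ
        = ‖(p s u - b s u) * (P n u t).toReal + b s u * ((P n u t).toReal - B n u t)‖ₑ := by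
          ring_nf
      _ ≤ ‖p s u - b s u‖ₑ * P n u t + ‖b s u‖ₑ * ‖(P n u t).toReal - B n u t‖ₑ := by
          rw [← hP_enorm, ← enorm_mul, ← enorm_mul, hP_enorm]
          exact enorm_add_le _ _
      _ ≤ e s * ENNReal.ofReal (p s u) * P n u t + ENNReal.ofReal (p s u) * F u := by
          gcongr
          · rw [Real.enorm_eq_ofReal_abs]
            exact ENNReal.ofReal_le_ofReal (hbp s hs u hu)
          · exact hF u hu
      _ = _ := by rw [mul_assoc]
  · rw [Set.indicator_of_notMem hu, sub_zero] at hstep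
    calc ‖p s u * (P n u t).toReal - b s u * B n u t‖ₑ = ‖p s u‖ₑ * P n u t := by
          rw [nStepR_of_notMem hu, mul_zero, sub_zero, enorm_mul, hP_enorm]
      _ ≤ e s * (ENNReal.ofReal (p s u) * P n u t) := by rw [← mul_assoc]; gcongr
      _ ≤ _ := le_self_add

/-- Telescoping: replace `p` by `b` one step at a time, at the `i`-th of `n + 1` vertices. -/
lemma enorm_nStepE_sub_nStepR_le (hp : ∀ u v, 0 ≤ p u v)
    (hbp : ∀ u ∈ Ω, ∀ v ∈ Ω, |b u v| ≤ p u v)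
    (he : ∀ u ∈ Ω, ∀ v, ‖p u v - Ω.indicator (b u) v‖ₑ ≤ e u * ENNReal.ofReal (p u v))
    (hG : ∀ u, G u t ≠ ∞) (hs : s ∈ Ω) :
    ‖(P n s t).toReal - B n s t‖ₑ ≤
      ∑ ij ∈ Finset.HasAntidiagonal.antidiagonal n, ∑' u, P ij.1 s u * (e u * P ij.2 u t) := by
  classical
  induction n generalizing s with
  | zero =>
    rw [nStepE_zero (Set.mem_univ s), nStepR_zero hs]
    split_ifs <;> simp
  | succ n ih =>
    refine (enorm_nStepE_succ_sub_le hp hbp he hG hs fun u hu => ih hu).trans_eq ?_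
    rw [Finset.Nat.sum_antidiagonal_succ]
    congr 1
    · simp [nStepE_zero (Set.mem_univ s)]
    · simp_rw [nStepE_succ (Set.mem_univ s), ← tsum_mul_tsum_mul_comm, Finset.mul_sum,
        Summable.tsum_finsetSum fun _ _ => ENNReal.summable]

theorem enorm_greenE_sub_greenR_le (hp : ∀ u v, 0 ≤ p u v)
    (hbp : ∀ u ∈ Ω, ∀ v ∈ Ω, |b u v| ≤ p u v)
    (he : ∀ u ∈ Ω, ∀ v, ‖p u v - Ω.indicator (b u) v‖ₑ ≤ e u * ENNReal.ofReal (p u v))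
    (hG : ∀ u, G u t ≠ ∞) (hs : s ∈ Ω) :
    ‖(G s t).toReal - greenR Ω b s t‖ₑ ≤ ∑' u, e u * (G s u * G u t) := by
  have hP_sum : HasSum (fun n => (P n s t).toReal) (G s t).toReal := hasSum_toReal_tsum (hG s)
  have hB_sum : Summable fun n => B n s t :=
    .of_enorm (ne_top_of_le_ne_top (hG s) (ENNReal.tsum_le_tsum fun n => enorm_nStepR_le hbp))
  unfold greenR
  rw [← hP_sum.tsum_eq, ← hP_sum.summable.tsum_sub hB_sum]
  calc ‖∑' n, ((P n s t).toReal - B n s t)‖ₑ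
      ≤ ∑' n, ∑ ij ∈ Finset.HasAntidiagonal.antidiagonal n, ∑' u, P ij.1 s u * (e u * P ij.2 u t) :=
        enorm_tsum_le_tsum_enorm.trans
          (ENNReal.tsum_le_tsum fun n => enorm_nStepE_sub_nStepR_le hp hbp he hG hs)
    _ = ∑' i, ∑' u, P i s u * (e u * G u t) := by
        rw [tsum_sum_antidiagonal]
        refine tsum_congr fun i => ENNReal.tsum_comm.trans ?_
        simp_rw [ENNReal.tsum_mul_left]
        rfl
    _ = ∑' u, e u * (G s u * G u t) := by
        rw [ENNReal.tsum_comm]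
        simp_rw [ENNReal.tsum_mul_right, mul_left_comm (e _)]
        rfl

end Perturbation

section Tree

variable {s t u v y : Word} {n : ℕ}

lemma le_lcpLen_iff {s t : List Bool} :
    n ≤ lcpLen s t ↔ ∃ v, v.length = n ∧ v <+: s ∧ v <+: t := by
  induction s generalizing t n with
  | nil => simp [lcpLen, eq_comm]
  | cons a s ih =>
    cases t with
    | nil => simp [lcpLen, eq_comm]
    | cons b t =>
      constructor
      · intro h
        cases n with
        | zero => exact ⟨[], rfl, List.nil_prefix, List.nil_prefix⟩
        | succ n =>
          rw [lcpLen] at h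
          split_ifs at h with hab
          · obtain ⟨v, rfl, hs, ht⟩ := ih.1 (Nat.le_of_succ_le_succ h)
            exact ⟨a :: v, rfl, List.cons_prefix_cons.2 ⟨rfl, hs⟩,
              List.cons_prefix_cons.2 ⟨hab, ht⟩⟩
          · omega
      · rintro ⟨_ | ⟨c, v⟩, rfl, hs, ht⟩
        · exact Nat.zero_le _
        · obtain ⟨rfl, hvs⟩ := List.cons_prefix_cons.1 hs
          obtain ⟨rfl, hvt⟩ := List.cons_prefix_cons.1 ht
          rw [lcpLen, if_pos rfl]
          exact Nat.succ_le_succ (ih.2 ⟨v, rfl, hvs, hvt⟩)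

lemma le_lcsLen_iff : n ≤ lcsLen s t ↔ ∃ v, v.length = n ∧ v <:+ s ∧ v <:+ t := by
  rw [lcsLen, le_lcpLen_iff, List.reverse_surjective.exists]
  simp only [List.length_reverse, List.reverse_prefix]

lemma length_le_lcsLen (hs : v <:+ s) (ht : v <:+ t) : v.length ≤ lcsLen s t :=
  le_lcsLen_iff.2 ⟨v, rfl, hs, ht⟩

lemma exists_suffix_length_eq_lcsLen (s t : Word) :
    ∃ v, v.length = lcsLen s t ∧ v <:+ s ∧ v <:+ t :=
  le_lcsLen_iff.1 le_rfl

lemma length_le_lcsLen_iff (hs : v <:+ s) : v.length ≤ lcsLen s t ↔ v <:+ t := by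
  refine ⟨fun h => ?_, length_le_lcsLen hs⟩
  obtain ⟨w, hw, hws, hwt⟩ := le_lcsLen_iff.1 h
  exact (List.suffix_of_suffix_length_le hs hws hw.ge).trans hwt

lemma lcsLen_comm (s t : Word) : lcsLen s t = lcsLen t s :=
  eq_of_forall_le_iff fun n => by simp only [le_lcsLen_iff, and_comm]

lemma lcsLen_le_left (s t : Word) : lcsLen s t ≤ s.length := by
  obtain ⟨v, hv, hs, -⟩ := exists_suffix_length_eq_lcsLen s t
  exact hv ▸ hs.length_le

lemma lcsLen_le_right (s t : Word) : lcsLen s t ≤ t.length :=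
  lcsLen_comm s t ▸ lcsLen_le_left t s

lemma lcsLen_eq_length (h : v <:+ s) : lcsLen s v = v.length :=
  (lcsLen_le_right s v).antisymm (length_le_lcsLen h List.suffix_rfl)

lemma min_lcsLen_le (s v u : Word) : min (lcsLen s v) (lcsLen v u) ≤ lcsLen s u := by
  obtain ⟨w, hw, hsw, hvw⟩ := le_lcsLen_iff.1 (min_le_left (lcsLen s v) (lcsLen v u))
  rw [← hw]
  exact length_le_lcsLen hsw
    ((length_le_lcsLen_iff hvw).1 (hw.trans_le (min_le_right _ _)))

lemma treeDist_comm (s t : Word) : treeDist s t = treeDist t s := by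
  rw [treeDist, treeDist, lcsLen_comm, add_comm]

lemma treeDist_cons (c : Bool) (v : Word) : treeDist (c :: v) v = 1 := by
  simp [treeDist, lcsLen_eq_length (List.suffix_cons c v)]

lemma length_le_add_treeDist (s t : Word) : s.length ≤ t.length + treeDist s t := by
  have := lcsLen_le_right s t
  unfold treeDist
  omega

lemma H1.finite_support {p : Word → Word → ℝ} {S : ℕ} (h1 : H1 p S) (t : Word) :
    (Function.support fun s => p s t).Finite := by
  refine (List.finite_length_le Bool (t.length + S)).subset fun s hs => ?_
  exact (length_le_add_treeDist s t).trans
    (Nat.add_le_add_left (not_lt.1 fun h => hs (h1 s t h)) _)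

lemma length_lt_treeDist_of_notMem_Delta (a : Word) (hy : y ∉ Delta v) :
    a.length < treeDist (a ++ v) y := by
  have := mt (length_le_lcsLen_iff (List.suffix_append a v)).1 hy
  simp only [treeDist, List.length_append]
  omega

lemma mem_geodesic_iff : v ∈ geodesic s u ↔ lcsLen s v + lcsLen v u = v.length + lcsLen s u := by
  have := lcsLen_le_left s v
  have := lcsLen_le_right s v
  have := lcsLen_le_left v u
  have := lcsLen_le_right v u
  have := lcsLen_le_left s u
  have := lcsLen_le_right s u
  simp only [geodesic, treeDist, Set.mem_ofPred_eq]
  omega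

lemma mem_geodesic_comm : v ∈ geodesic s u ↔ v ∈ geodesic u s := by
  rw [mem_geodesic_iff, mem_geodesic_iff, lcsLen_comm s v, lcsLen_comm v u, lcsLen_comm s u,
    add_comm (lcsLen v s)]

lemma suffix_or_suffix_of_mem_geodesic (h : v ∈ geodesic s u) : v <:+ s ∨ v <:+ u := by
  rw [mem_geodesic_iff] at h
  have hmin := min_lcsLen_le s v u
  rw [← length_le_lcsLen_iff (t := s) List.suffix_rfl,
    ← length_le_lcsLen_iff (t := u) List.suffix_rfl, lcsLen_comm v s]
  omega

lemma not_suffix_of_mem_geodesic (h : v ∈ geodesic s u) {c : Bool} (hs : c :: v <:+ s) :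
    ¬ c :: v <:+ u := by
  intro hu
  have := length_le_lcsLen hs hu
  rw [List.length_cons] at this
  have := lcsLen_le_right s v
  have := lcsLen_le_left v u
  rw [mem_geodesic_iff] at h
  omega

lemma mem_geodesic_of_suffix (hv : v <:+ s) (hle : lcsLen s u ≤ v.length) :
    v ∈ geodesic s u := by
  obtain ⟨w, hw, hws, hwu⟩ := exists_suffix_length_eq_lcsLen s u
  have hwv : w <:+ v := List.suffix_of_suffix_length_le hws hv (hw.trans_le hle)
  obtain ⟨x, hx, hxv, hxu⟩ := exists_suffix_length_eq_lcsLen v u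
  rw [mem_geodesic_iff, lcsLen_eq_length hv, ← hw, ← hx]
  have := length_le_lcsLen hwv hwu
  have := length_le_lcsLen (hxv.trans hv) hxu
  omega

lemma exists_median (s t u : Word) :
    ∃ v ∈ geodesic s u, v ∈ geodesic u t ∧ lcsLen s t ≤ v.length ∧ (v <:+ s ∨ v <:+ t) := by
  obtain ⟨hsu, htu⟩ | ⟨hst, htu⟩ | ⟨hst, hsu⟩ :
      (lcsLen s u ≤ lcsLen s t ∧ lcsLen t u ≤ lcsLen s t) ∨
        (lcsLen s t ≤ lcsLen s u ∧ lcsLen u t ≤ lcsLen s u) ∨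
          (lcsLen s t ≤ lcsLen u t ∧ lcsLen u s ≤ lcsLen u t) := by
    rw [lcsLen_comm t u, lcsLen_comm u s]
    omega
  · obtain ⟨v, hv, hvs, hvt⟩ := exists_suffix_length_eq_lcsLen s t
    rw [← hv] at hsu htu ⊢
    exact ⟨v, mem_geodesic_of_suffix hvs hsu, mem_geodesic_comm.1 (mem_geodesic_of_suffix hvt htu),
      le_rfl, .inl hvs⟩
  · obtain ⟨v, hv, hvs, hvu⟩ := exists_suffix_length_eq_lcsLen s u
    exact ⟨v, mem_geodesic_of_suffix hvs hv.ge, mem_geodesic_of_suffix hvu (hv.symm ▸ htu),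
      hv.symm ▸ hst, .inl hvs⟩
  · obtain ⟨v, hv, hvu, hvt⟩ := exists_suffix_length_eq_lcsLen u t
    exact ⟨v, mem_geodesic_comm.1 (mem_geodesic_of_suffix hvu (hv.symm ▸ hsu)),
      mem_geodesic_of_suffix hvu hv.ge, hv.symm ▸ hst, .inr hvt⟩

end Tree

section Ancona

variable {p : Word → Word → ℝ} {S : ℕ} {κ : ℝ≥0∞} {s u : Word}

local notation "P" => nStepE Set.univ p
local notation "G" => greenE Set.univ p

/-- The Harnack inequalities with constant `κ`: the Green kernel of `p` changes by a factor of at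
most `κ` when either argument moves to a neighbour in the tree. -/
structure Harnack (p : Word → Word → ℝ) (κ : ℝ≥0∞) : Prop where
  one_le : 1 ≤ κ
  ne_top : κ ≠ ∞
  left {s s' : Word} : treeDist s s' = 1 → ∀ t,
    greenE Set.univ p s t ≤ κ * greenE Set.univ p s' t
  right {t t' : Word} : treeDist t t' = 1 → ∀ s,
    greenE Set.univ p s t ≤ κ * greenE Set.univ p s t'

lemma H3.harnack {δ : ℝ} {K : ℕ} (h3 : H3 p δ K) (hδ : 0 < δ) (hδ1 : δ ≤ 1) :
    Harnack p (ENNReal.ofReal δ ^ K)⁻¹ := by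
  have hpow_ne_zero : ENNReal.ofReal δ ^ K ≠ 0 := pow_ne_zero _ (ENNReal.ofReal_pos.2 hδ).ne'
  have hpow_ne_top : ENNReal.ofReal δ ^ K ≠ ∞ := ENNReal.pow_ne_top ENNReal.ofReal_ne_top
  have hpow_le_one (k : ℕ) : ENNReal.ofReal δ ^ k ≤ 1 :=
    pow_le_one' (ENNReal.ofReal_le_one.2 hδ1) k
  have exists_nStepE {s s' : Word} (h : treeDist s s' = 1) :
      ∃ k, ENNReal.ofReal δ ^ K ≤ P k s s' := by
    obtain ⟨k, hk, w, rfl, rfl, hw⟩ := h3 s s' h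
    refine ⟨k, (pow_le_pow_right_of_le_one' (ENNReal.ofReal_le_one.2 hδ1) hk).trans
      (pow_le_nStepE fun i hi => ?_)⟩
    simpa only [List.append_nil] using hw i hi []
  refine ⟨ENNReal.one_le_inv.2 (hpow_le_one K), ENNReal.inv_ne_top.2 hpow_ne_zero,
    fun {s s'} h t => ?_, fun {t t'} h s => ?_⟩
  · obtain ⟨k, hk⟩ := exists_nStepE ((treeDist_comm s' s).trans h)
    rw [← ENNReal.mul_le_iff_le_inv hpow_ne_zero hpow_ne_top]
    exact (mul_le_mul_left hk _).trans (nStepE_mul_greenE_le k s' s t)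
  · obtain ⟨k, hk⟩ := exists_nStepE h
    rw [← ENNReal.mul_le_iff_le_inv hpow_ne_zero hpow_ne_top, mul_comm]
    exact (mul_le_mul_right hk _).trans (greenE_mul_nStepE_le k s t t')

lemma apply_append_le_pow_mul {f : Word → ℝ≥0∞}
    (hf : ∀ s s', treeDist s s' = 1 → f s ≤ κ * f s') (a v : Word) :
    f (a ++ v) ≤ κ ^ a.length * f v := by
  induction a with
  | nil => simp
  | cons c a ih =>
    calc f (c :: (a ++ v)) ≤ κ * f (a ++ v) := hf _ _ (treeDist_cons c _)
      _ ≤ κ * (κ ^ a.length * f v) := by gcongr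
      _ = κ ^ (c :: a).length * f v := by rw [List.length_cons, pow_succ', mul_assoc]

lemma apply_le_pow_mul_append {f : Word → ℝ≥0∞}
    (hf : ∀ s s', treeDist s s' = 1 → f s ≤ κ * f s') (a v : Word) :
    f v ≤ κ ^ a.length * f (a ++ v) := by
  induction a with
  | nil => simp
  | cons c a ih =>
    calc f v ≤ κ ^ a.length * f (a ++ v) := ih
      _ ≤ κ ^ a.length * (κ * f (c :: (a ++ v))) := by
          gcongr
          exact hf _ _ ((treeDist_comm _ _).trans (treeDist_cons c _))
      _ = κ ^ (c :: a).length * f (c :: a ++ v) := by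
          rw [List.length_cons, pow_succ, mul_assoc, List.cons_append]

lemma Harnack.greenE_ne_top (h : Harnack p κ) (hdiag : ∀ v, G v v ≠ ∞) (s t : Word) :
    G s t ≠ ∞ := by
  have hs := apply_append_le_pow_mul (f := fun s => G s t) (fun _ _ hd => h.left hd t) s []
  have ht := apply_le_pow_mul_append (f := fun s => G s t) (fun _ _ hd => h.left hd t) t []
  simp only [List.append_nil] at hs ht
  have hfin (n : ℕ) : κ ^ n ≠ ∞ := ENNReal.pow_ne_top h.ne_top
  exact ne_top_of_le_ne_top
    (ENNReal.mul_ne_top (hfin _) (ENNReal.mul_ne_top (hfin _) (hdiag t))) (hs.trans (by gcongr))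

/-- The words of length at most `S`, as a finite set: a step of range `S` across the edge below `x`
has an endpoint `a ++ x` with `a` in it. -/
noncomputable def shortWords (S : ℕ) : Finset Word :=
  (List.finite_length_le Bool S).toFinset

lemma mem_shortWords {a : Word} : a ∈ shortWords S ↔ a.length ≤ S := by
  simp [shortWords]

lemma greenE_le_sum_of_mem_Delta (h1 : H1 p S) {x : Word} (hs : s ∈ Delta x) (hu : u ∉ Delta x) :
    G s u ≤ ∑ a ∈ shortWords S, G s (a ++ x) * G (a ++ x) u := by
  refine greenE_le_sum_of_cut (g := fun a => a ++ x) (A := Delta x) ?_ hs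
  rintro _ ⟨a, rfl⟩
  by_cases ha : a.length ≤ S
  · exact .inl ⟨a, mem_shortWords.2 ha, rfl⟩
  · refine .inr ⟨fun h => hu ⟨a, h⟩, fun y hy => ?_⟩
    contrapose! hy
    exact h1 _ _ ((not_le.1 ha).trans (length_lt_treeDist_of_notMem_Delta a hy))

lemma greenE_le_sum_of_notMem_Delta (h1 : H1 p S) {x : Word} (hs : s ∉ Delta x)
    (hu : u ∈ Delta x) : G s u ≤ ∑ a ∈ shortWords S, G s (a ++ x) * G (a ++ x) u := by
  refine greenE_le_sum_of_cut (g := fun a => a ++ x)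
    (A := {y | y ∈ Delta x → ∃ a ∈ shortWords S, a ++ x = y}) (fun s hsA => ?_) fun h => absurd h hs
  by_cases hs : s ∈ Delta x
  · exact .inl (hsA hs)
  · refine .inr ⟨fun h => hs (h ▸ hu), ?_⟩
    rintro _ hy ⟨a, rfl⟩
    refine ⟨a, mem_shortWords.2 (not_lt.1 fun ha => hy (h1 _ _ ?_)), rfl⟩
    rw [treeDist_comm]
    exact ha.trans (length_lt_treeDist_of_notMem_Delta a hs)

lemma Harnack.sum_shortWords_le (h : Harnack p κ) (c : Bool) (s u v : Word) :
    ∑ a ∈ shortWords S, G s (a ++ c :: v) * G (a ++ c :: v) u ≤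
      (shortWords S).card * (κ ^ (S + 1) * κ ^ (S + 1)) * (G s v * G v u) := by
  rw [mul_assoc, ← nsmul_eq_mul]
  refine Finset.sum_le_card_nsmul _ _ _ fun a ha => ?_
  have hpow : κ ^ (a ++ [c]).length ≤ κ ^ (S + 1) :=
    pow_le_pow_right₀ h.one_le (by simpa using mem_shortWords.1 ha)
  have hright := apply_append_le_pow_mul (fun _ _ hd => h.right hd s) (a ++ [c]) v
  have hleft := apply_append_le_pow_mul (f := fun w => G w u) (fun _ _ hd => h.left hd u)
    (a ++ [c]) v
  simp only [List.append_assoc, List.cons_append, List.nil_append] at hright hleft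
  calc G s (a ++ c :: v) * G (a ++ c :: v) u
      ≤ (κ ^ (S + 1) * G s v) * (κ ^ (S + 1) * G v u) :=
        mul_le_mul' (hright.trans (by gcongr)) (hleft.trans (by gcongr))
    _ = κ ^ (S + 1) * κ ^ (S + 1) * (G s v * G v u) := mul_mul_mul_comm _ _ _ _

/-- Ancona's inequality: to get past `v`, the walk has to visit a point within bounded distance of
`v`, and the Harnack inequalities move that point to `v`. -/
theorem Harnack.exists_greenE_le_mul (h : Harnack p κ) (h1 : H1 p S) :
    ∃ A ≠ ∞, ∀ s u, ∀ v ∈ geodesic s u, G s u ≤ A * (G s v * G v u) := by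
  set A₀ : ℝ≥0∞ := (shortWords S).card * (κ ^ (S + 1) * κ ^ (S + 1))
  have hA₀_ne_top : A₀ ≠ ∞ := by finiteness [h.ne_top]
  have of_edge {s u v : Word} {c : Bool}
      (hcut : G s u ≤ ∑ a ∈ shortWords S, G s (a ++ c :: v) * G (a ++ c :: v) u) :
      G s u ≤ (1 + A₀) * (G s v * G v u) :=
    hcut.trans ((h.sum_shortWords_le c s u v).trans (by gcongr; exact le_add_self))
  refine ⟨1 + A₀, ENNReal.add_ne_top.2 ⟨ENNReal.one_ne_top, hA₀_ne_top⟩, fun s u v hv => ?_⟩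
  rcases suffix_or_suffix_of_mem_geodesic hv with ⟨a, rfl⟩ | ⟨a, rfl⟩ <;>
    rcases List.eq_nil_or_concat a with rfl | ⟨a, c, rfl⟩
  · exact (le_mul_of_one_le_left' (one_le_greenE_self v)).trans
      (le_mul_of_one_le_left' le_self_add)
  · have hs : c :: v <:+ a.concat c ++ v := ⟨a, by simp⟩
    exact of_edge (greenE_le_sum_of_mem_Delta h1 hs (not_suffix_of_mem_geodesic hv hs))
  · exact (le_mul_of_one_le_right' (one_le_greenE_self v)).trans
      (le_mul_of_one_le_left' le_self_add)
  · have hu : c :: v <:+ a.concat c ++ v := ⟨a, by simp⟩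
    exact of_edge (greenE_le_sum_of_notMem_Delta h1
      (not_suffix_of_mem_geodesic (mem_geodesic_comm.1 hv) hu) hu)

end Ancona

section ThreePoint

variable {p : Word → Word → ℝ} {S : ℕ} {κ θ L : ℝ≥0∞} {s t : Word}

local notation "P" => nStepE Set.univ p
local notation "G" => greenE Set.univ p

/-- The median `v` of the tripod `s, t, u` lies on both geodesics to `u`. -/
lemma exists_greenE_mul_greenE_le {A g : ℝ≥0∞}
    (hA : ∀ s u, ∀ v ∈ geodesic s u, G s u ≤ A * (G s v * G v u)) (hg : ∀ v, G v v ≤ g)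
    (s t u : Word) : ∃ v, lcsLen s t ≤ v.length ∧ (v <:+ s ∨ v <:+ t) ∧
      G s u * G u t ≤ A * A * g * G s t * (G v u * G u v) := by
  obtain ⟨v, hsu, hut, hlen, hv⟩ := exists_median s t u
  refine ⟨v, hlen, hv, ?_⟩
  calc G s u * G u t
      ≤ (A * (G s v * G v u)) * (A * (G u v * G v t)) := by
        gcongr
        exacts [hA s u v hsu, hA u t v hut]
    _ = A * A * (G s v * G v t) * (G v u * G u v) := by ring
    _ ≤ A * A * (g * G s t) * (G v u * G u v) := by
        gcongr A * A * ?_ * _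
        exact (greenE_mul_greenE_le s v t).trans (mul_le_mul_left (hg v) _)
    _ = A * A * g * G s t * (G v u * G u v) := by ring

lemma length_le_of_nStepE_ne_zero (h1 : H1 p S) {n : ℕ} (h : P n s t ≠ 0) :
    s.length ≤ t.length + n * S := by
  induction n generalizing s with
  | zero =>
    rw [nStepE_zero (Set.mem_univ s)] at h
    simp only [(ite_ne_right_iff.1 h).1, zero_mul, add_zero, le_refl]
  | succ n ih =>
    rw [nStepE_succ (Set.mem_univ s)] at h
    obtain ⟨u, hu⟩ := not_forall.1 (mt ENNReal.tsum_eq_zero.2 h)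
    have hut := ih (right_ne_zero_of_mul hu)
    have hsu : treeDist s u ≤ S := by
      contrapose! hu
      simp [h1 s u hu]
    have := length_le_add_treeDist s u
    rw [Nat.succ_mul]
    omega

lemma pow_length_mul_nStepE_le (h1 : H1 p S) (hθ1 : θ ≤ 1) (hθS : θ ^ S ≠ 0) (n : ℕ)
    (v u : Word) : θ ^ u.length * P n v u ≤ θ ^ v.length * (θ ^ S)⁻¹ ^ n * P n v u := by
  by_cases h : P n v u = 0
  · simp [h]
  have hθS_ne_top : θ ^ S ≠ ∞ := ENNReal.pow_ne_top (ne_top_of_le_ne_top ENNReal.one_ne_top hθ1)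
  gcongr
  calc θ ^ u.length = θ ^ u.length * (θ ^ S * (θ ^ S)⁻¹) ^ n := by
        rw [ENNReal.mul_inv_cancel hθS hθS_ne_top, one_pow, mul_one]
    _ = θ ^ (u.length + n * S) * (θ ^ S)⁻¹ ^ n := by
        rw [mul_pow, pow_add, mul_comm n S, pow_mul, mul_assoc]
    _ ≤ θ ^ v.length * (θ ^ S)⁻¹ ^ n := by
        gcongr 1
        exact pow_le_pow_right_of_le_one' hθ1 (length_le_of_nStepE_ne_zero h1 h)

lemma tsum_pow_length_mul_greenE_self_le (h1 : H1 p S) (hL : ∀ n v, P n v v ≤ L ^ n)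
    (hθ1 : θ ≤ 1) (hθS : θ ^ S ≠ 0) (v : Word) :
    ∑' u : Word, θ ^ u.length * (G v u * G u v) ≤
      θ ^ v.length * ((1 - (θ ^ S)⁻¹ * L)⁻¹ * (1 - L)⁻¹) := by
  have nStepE_le (n m : ℕ) : ∑' u : Word, θ ^ u.length * (P n v u * P m u v) ≤
      θ ^ v.length * (((θ ^ S)⁻¹ * L) ^ n * L ^ m) :=
    calc ∑' u : Word, θ ^ u.length * (P n v u * P m u v)
        ≤ ∑' u : Word, θ ^ v.length * (θ ^ S)⁻¹ ^ n * (P n v u * P m u v) :=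
          ENNReal.tsum_le_tsum fun u => by
            simp_rw [← mul_assoc]
            exact mul_le_mul_left (pow_length_mul_nStepE_le h1 hθ1 hθS n v u) _
      _ ≤ θ ^ v.length * (θ ^ S)⁻¹ ^ n * L ^ (n + m) := by
          rw [ENNReal.tsum_mul_left, ← nStepE_add]
          gcongr
          exact hL _ _
      _ = θ ^ v.length * (((θ ^ S)⁻¹ * L) ^ n * L ^ m) := by
          rw [pow_add, mul_pow]
          ring
  calc ∑' u : Word, θ ^ u.length * (G v u * G u v)
      = ∑' n, ∑' m, ∑' u : Word, θ ^ u.length * (P n v u * P m u v) := by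
        simp_rw [greenE, ← ENNReal.tsum_mul_right, ← ENNReal.tsum_mul_left]
        rw [ENNReal.tsum_comm]
        exact tsum_congr fun n => ENNReal.tsum_comm
    _ ≤ ∑' n, ∑' m, θ ^ v.length * (((θ ^ S)⁻¹ * L) ^ n * L ^ m) :=
        ENNReal.tsum_le_tsum fun n => ENNReal.tsum_le_tsum (nStepE_le n)
    _ = θ ^ v.length * ((1 - (θ ^ S)⁻¹ * L)⁻¹ * (1 - L)⁻¹) := by
        simp_rw [ENNReal.tsum_mul_left, ENNReal.tsum_mul_right, ENNReal.tsum_geometric]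

/-- The suffixes of `s` of length at least `k`: the vertices at height at least `k` on the segment
from the root to `s`. -/
def longSuffixes (k : ℕ) (s : Word) : Set Word := {v | v <:+ s ∧ k ≤ v.length}

lemma tsum_longSuffixes_pow_length_le (θ : ℝ≥0∞) (k : ℕ) (s : Word) :
    ∑' v : longSuffixes k s, θ ^ v.1.length ≤ θ ^ k * (1 - θ)⁻¹ := by
  have hinj : Function.Injective fun v : longSuffixes k s => v.1.length - k := by
    rintro ⟨v, hv, hkv⟩ ⟨w, hw, hkw⟩ hvw
    have hlen : v.length = w.length := (tsub_left_inj hkv hkw).1 hvw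
    exact Subtype.ext ((List.suffix_of_suffix_length_le hv hw hlen.le).eq_of_length hlen)
  calc ∑' v : longSuffixes k s, θ ^ v.1.length
      = ∑' v : longSuffixes k s, θ ^ k * θ ^ (v.1.length - k) :=
        tsum_congr fun v => by rw [← pow_add, Nat.add_sub_cancel' v.2.2]
    _ ≤ ∑' i, θ ^ k * θ ^ i :=
        ENNReal.tsum_comp_le_tsum_of_injective hinj fun i => θ ^ k * θ ^ i
    _ = θ ^ k * (1 - θ)⁻¹ := by rw [ENNReal.tsum_mul_left, ENNReal.tsum_geometric]

theorem Harnack.exists_tsum_pow_length_mul_greenE_le (h : Harnack p κ) (h1 : H1 p S)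
    (hL : ∀ n v, P n v v ≤ L ^ n) (hθ : θ < 1) (hLθ : L < θ ^ S) :
    ∃ A ≠ ∞, ∀ s t,
      ∑' u : Word, θ ^ u.length * (G s u * G u t) ≤ A * θ ^ lcsLen s t * G s t := by
  obtain ⟨A, hA_ne_top, hA⟩ := h.exists_greenE_le_mul h1
  have hθS : θ ^ S ≠ 0 := (zero_le.trans_lt hLθ).ne'
  have hL1 : L < 1 := hLθ.trans_le (pow_le_one' hθ.le S)
  have hθSL : (θ ^ S)⁻¹ * L < 1 := by
    rw [mul_comm]
    exact ENNReal.div_lt_of_lt_mul (by rwa [one_mul])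
  have inv_one_sub_ne_top {x : ℝ≥0∞} (hx : x < 1) : (1 - x)⁻¹ ≠ ∞ :=
    ENNReal.inv_ne_top.2 (tsub_pos_of_lt hx).ne'
  set g := (1 - L)⁻¹
  set M := (1 - (θ ^ S)⁻¹ * L)⁻¹ * g
  refine ⟨A * A * g * (2 * (1 - θ)⁻¹ * M), ?_, fun s t => ?_⟩
  · finiteness [inv_one_sub_ne_top hθ, inv_one_sub_ne_top hL1, inv_one_sub_ne_top hθSL]
  set V := longSuffixes (lcsLen s t) s ∪ longSuffixes (lcsLen s t) t
  calc ∑' u : Word, θ ^ u.length * (G s u * G u t)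
      ≤ ∑' u : Word, ∑' v : V, A * A * g * G s t * (θ ^ u.length * (G v u * G u v)) := by
        refine ENNReal.tsum_le_tsum fun u => ?_
        obtain ⟨v, hlen, hv, hle⟩ := exists_greenE_mul_greenE_le hA
          (fun v => greenE_self_le_of_nStepE_le fun n => hL n v) s t u
        refine le_trans ?_ (ENNReal.le_tsum ⟨v, hv.imp (⟨·, hlen⟩) (⟨·, hlen⟩)⟩)
        rw [mul_left_comm _ (θ ^ _)]
        gcongr
    _ = A * A * g * G s t * ∑' v : V, ∑' u : Word, θ ^ u.length * (G v u * G u v) := by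
        rw [ENNReal.tsum_comm]
        simp_rw [ENNReal.tsum_mul_left]
    _ ≤ A * A * g * G s t * ∑' v : V, θ ^ v.1.length * M := by
        gcongr with v
        exact tsum_pow_length_mul_greenE_self_le h1 hL hθ.le hθS v.1
    _ ≤ A * A * g * G s t * ((2 * (θ ^ lcsLen s t * (1 - θ)⁻¹)) * M) := by
        rw [ENNReal.tsum_mul_right, two_mul]
        gcongr
        exact (ENNReal.tsum_union_le (fun v : Word => θ ^ v.length) _ _).trans
          (add_le_add (tsum_longSuffixes_pow_length_le θ _ s)
            (tsum_longSuffixes_pow_length_le θ _ t))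
    _ = A * A * g * (2 * (1 - θ)⁻¹ * M) * θ ^ lcsLen s t * G s t := by ring

end ThreePoint

section OperatorNorm

variable {X : Type*} {p : X → X → ℝ} {m : X → ℝ} {lam : ℝ}

local notation "P" => nStepE Set.univ p

lemma opNormBound.sqrt_tsum_le (h : opNormBound m p lam) (hm : ∀ x, 0 ≤ m x) {f : X → ℝ}
    (hf : (Function.support f).Finite)
    (hpf : (Function.support fun s => ∑' t, p s t * f t).Finite) (hlam : 0 ≤ lam) :
    √(∑' s, m s * (∑' t, p s t * f t) ^ 2) ≤ lam * √(∑' x, m x * f x ^ 2) := by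
  set N := √(∑' s, m s * (∑' t, p s t * f t) ^ 2)
  have hsq : ∑' s, m s * (∑' t, p s t * f t) * ∑' t, p s t * f t = N ^ 2 := by
    rw [Real.sq_sqrt (tsum_nonneg fun s => mul_nonneg (hm s) (sq_nonneg _))]
    exact tsum_congr fun s => by ring
  have hNN : N * N ≤ lam * √(∑' x, m x * f x ^ 2) * N := by
    have hbound := h f (fun s => ∑' t, p s t * f t) hf hpf
    rwa [hsq, abs_of_nonneg (sq_nonneg N), sq] at hbound
  rcases (Real.sqrt_nonneg _ : 0 ≤ N).eq_or_lt with h0 | hpos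
  · exact h0.ge.trans (mul_nonneg hlam (Real.sqrt_nonneg _))
  · exact le_of_mul_le_mul_right hNN hpos

lemma finite_support_nStepE (hcol : ∀ t, (Function.support fun s => p s t).Finite) (n : ℕ)
    (t : X) : (Function.support fun s => P n s t).Finite := by
  classical
  induction n with
  | zero =>
    refine (Set.finite_singleton t).subset fun s hs => ?_
    rw [Function.mem_support, nStepE_zero (Set.mem_univ s)] at hs
    exact (ite_ne_right_iff.1 hs).1
  | succ n ih =>
    refine (ih.biUnion fun u _ => hcol u).subset fun s hs => ?_
    rw [Function.mem_support, nStepE_succ (Set.mem_univ s)] at hs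
    obtain ⟨u, hu⟩ := not_forall.1 (mt ENNReal.tsum_eq_zero.2 hs)
    exact Set.mem_biUnion (right_ne_zero_of_mul hu) fun h => hu (by simp [h])

lemma nStepE_ne_top (hcol : ∀ t, (Function.support fun s => p s t).Finite) (n : ℕ) (s t : X) :
    P n s t ≠ ∞ := by
  classical
  induction n generalizing s with
  | zero =>
    rw [nStepE_zero (Set.mem_univ s)]
    split_ifs <;> simp
  | succ n ih =>
    rw [nStepE_succ (Set.mem_univ s), tsum_eq_sum' (s := (finite_support_nStepE hcol n t).toFinset)]
    · exact ENNReal.sum_ne_top.2 fun u _ => ENNReal.mul_ne_top ENNReal.ofReal_ne_top (ih u)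
    · rw [Set.Finite.coe_toFinset]
      exact Function.support_mul_subset_right _ _

lemma opNormBound.sqrt_tsum_nStepE_le (h : opNormBound m p lam) (hm : ∀ x, 0 ≤ m x)
    (hlam : 0 ≤ lam) (hp : ∀ s t, 0 ≤ p s t)
    (hcol : ∀ t, (Function.support fun s => p s t).Finite) (n : ℕ) (v : X) :
    √(∑' x, m x * (P n x v).toReal ^ 2) ≤ lam ^ n * √(m v) := by
  classical
  have hfin (n : ℕ) : (Function.support fun s => (P n s v).toReal).Finite :=
    (finite_support_nStepE hcol n v).subset fun s hs h0 => hs (by simp [h0])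
  have hsucc (n : ℕ) (s : X) : (P (n + 1) s v).toReal = ∑' u, p s u * (P n u v).toReal :=
    (hasSum_toReal_nStepE_succ hp (nStepE_ne_top hcol _ _ _)).tsum_eq.symm
  induction n with
  | zero =>
    rw [tsum_eq_single v fun x hx => by simp [nStepE_zero (Set.mem_univ x), hx]]
    simp [nStepE_zero]
  | succ n ih =>
    simp_rw [hsucc]
    calc √(∑' x, m x * (∑' u, p x u * (P n u v).toReal) ^ 2)
        ≤ lam * √(∑' x, m x * (P n x v).toReal ^ 2) :=
          h.sqrt_tsum_le hm (hfin n) (by simpa only [hsucc] using hfin (n + 1)) hlam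
      _ ≤ lam * (lam ^ n * √(m v)) := by gcongr
      _ = lam ^ (n + 1) * √(m v) := by ring

lemma opNormBound.nStepE_self_le (h : opNormBound m p lam) (hm : ∀ x, 0 < m x)
    (hlam : 0 ≤ lam) (hp : ∀ s t, 0 ≤ p s t)
    (hcol : ∀ t, (Function.support fun s => p s t).Finite) (n : ℕ) (v : X) :
    P n v v ≤ ENNReal.ofReal lam ^ n := by
  have hsummable : Summable fun x => m x * (P n x v).toReal ^ 2 :=
    summable_of_hasFiniteSupport <| (finite_support_nStepE hcol n v).subset fun x hx h0 =>
      hx (by simp [h0])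
  have hmul : √(m v) * (P n v v).toReal ≤ √(m v) * lam ^ n :=
    calc √(m v) * (P n v v).toReal = √(m v * (P n v v).toReal ^ 2) := by
          rw [Real.sqrt_mul (hm v).le, Real.sqrt_sq ENNReal.toReal_nonneg]
      _ ≤ √(∑' x, m x * (P n x v).toReal ^ 2) := Real.sqrt_le_sqrt <|
          hsummable.le_tsum v fun x _ => mul_nonneg (hm x).le (sq_nonneg _)
      _ ≤ lam ^ n * √(m v) := h.sqrt_tsum_nStepE_le (fun x => (hm x).le) hlam hp hcol n v
      _ = √(m v) * lam ^ n := mul_comm _ _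
  rw [← ENNReal.ofReal_pow hlam,
    ENNReal.le_ofReal_iff_toReal_le (nStepE_ne_top hcol n v v) (pow_nonneg hlam n)]
  exact le_of_mul_le_mul_left hmul (Real.sqrt_pos.2 (hm v))

end OperatorNorm

section PerturbedGreen

variable {p b : Word → Word → ℝ} {S : ℕ} {δ lam q θ C : ℝ} {κ : ℝ≥0∞} {s t z : Word}

local notation "P" => nStepE Set.univ p
local notation "G" => greenE Set.univ p

lemma Perturb.mono (hb : Perturb p b z q C) (hq : 0 ≤ q) (hqθ : q ≤ θ) (hC : 0 ≤ C) :
    Perturb p b z θ C := fun s t hs ht =>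
  ⟨(hb s t hs ht).1, (hb s t hs ht).2.trans (by gcongr)⟩

lemma Perturb.abs_sub_le (hb : Perturb p b z θ C) (hp : 0 ≤ p s t) (h2 : H2 p δ) (hδ : 0 < δ)
    (hθ : 0 ≤ θ) (hC : 0 ≤ C) (hs : s ∈ Delta z) (ht : t ∈ Delta z) :
    |p s t - b s t| ≤ C / δ * θ ^ s.length * p s t := by
  obtain ⟨hbp, hsub⟩ := hb s t hs ht
  rcases hp.eq_or_lt with h0 | hpos
  · rw [← h0, abs_nonpos_iff] at hbp
    simp [← h0, hbp]
  · calc |p s t - b s t| ≤ C * θ ^ s.length := (abs_sub_comm _ _).trans_le hsub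
      _ = C / δ * θ ^ s.length * δ := by field_simp
      _ ≤ C / δ * θ ^ s.length * p s t := by
          gcongr
          exact h2 s t hpos

lemma H1.le_inv_pow_mul_of_notMem_Delta (h1 : H1 p S) (hp : 0 ≤ p s t) (hθ0 : 0 < θ)
    (hθ1 : θ ≤ 1) (hs : s ∈ Delta z) (ht : t ∉ Delta z) :
    p s t ≤ (θ ^ (z.length + S))⁻¹ * θ ^ s.length * p s t := by
  obtain ⟨a, rfl⟩ := hs
  by_cases hdist : S < treeDist (a ++ z) t
  · simp [h1 _ _ hdist]
  · have hlen : (a ++ z).length ≤ z.length + S := by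
      have := length_lt_treeDist_of_notMem_Delta a ht
      rw [List.length_append]
      omega
    refine le_mul_of_one_le_left hp ?_
    rw [← div_eq_inv_mul, one_le_div (pow_pos hθ0 _)]
    exact pow_le_pow_of_le_one hθ0.le hθ1 hlen

/-- Killing the walk on leaving `Δ_z` is also a perturbation of relative size `θ ^ |s|`, since it
only changes the steps from points within distance `S` of the complement of `Δ_z`. -/
lemma Perturb.enorm_sub_indicator_le (hb : Perturb p b z θ C) (hp : ∀ s t, 0 ≤ p s t)
    (h1 : H1 p S) (h2 : H2 p δ) (hδ : 0 < δ) (hθ0 : 0 < θ) (hθ1 : θ ≤ 1) (hC : 0 ≤ C)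
    (hs : s ∈ Delta z) (t : Word) :
    ‖p s t - (Delta z).indicator (b s) t‖ₑ ≤
      ENNReal.ofReal (C / δ + (θ ^ (z.length + S))⁻¹) * ENNReal.ofReal θ ^ s.length *
        ENNReal.ofReal (p s t) := by
  rw [Real.enorm_eq_ofReal_abs, ← ENNReal.ofReal_pow hθ0.le, ← ENNReal.ofReal_mul (by positivity),
    ← ENNReal.ofReal_mul (by positivity)]
  refine ENNReal.ofReal_le_ofReal ?_
  have hpst := hp s t
  by_cases ht : t ∈ Delta z
  · rw [Set.indicator_of_mem ht]
    refine (hb.abs_sub_le hpst h2 hδ hθ0.le hC hs ht).trans ?_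
    gcongr
    exact le_add_of_nonneg_right (by positivity)
  · rw [Set.indicator_of_notMem ht, sub_zero, abs_of_nonneg hpst]
    refine (h1.le_inv_pow_mul_of_notMem_Delta hpst hθ0 hθ1 hs ht).trans ?_
    gcongr
    exact le_add_of_nonneg_left (by positivity)

lemma exists_lt_one_lt_pow (hq : q < 1) (hlam : lam < 1) (S : ℕ) :
    ∃ θ < 1, q < θ ∧ lam < θ ^ S := by
  have hpow : ∀ᶠ θ : ℝ in nhds 1, lam < θ ^ S :=
    ((continuous_pow S).tendsto' 1 1 (one_pow S)).eventually_const_lt hlam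
  have hlt : ∀ᶠ θ : ℝ in nhdsWithin 1 (Set.Iio 1), θ < 1 := self_mem_nhdsWithin
  exact (hlt.and (((eventually_gt_nhds hq).and hpow).filter_mono nhdsWithin_le_nhds)).exists

theorem Perturb.exists_enorm_greenE_sub_greenR_le (hb : Perturb p b z q C)
    (hp : ∀ s t, 0 ≤ p s t) (hκ : Harnack p κ) (h1 : H1 p S) (h2 : H2 p δ)
    (hdiag : ∀ n v, P n v v ≤ ENNReal.ofReal lam ^ n) (hlam : lam < 1) (hδ : 0 < δ)
    (hq : q ∈ Set.Ico 0 1) (hC : 0 ≤ C) (hG : ∀ s t, G s t ≠ ∞) :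
    ∃ A ≠ ∞, ∃ θ < 1, ∀ s ∈ Delta z, ∀ t,
      ‖(G s t).toReal - greenR (Delta z) b s t‖ₑ ≤ A * θ ^ lcsLen s t * G s t := by
  obtain ⟨θ, hθ1, hqθ, hlamθ⟩ := exists_lt_one_lt_pow hq.2 hlam S
  have hθ0 : 0 < θ := hq.1.trans_lt hqθ
  have hθb := hb.mono hq.1 hqθ.le hC
  set Θ := ENNReal.ofReal θ
  set D := ENNReal.ofReal (C / δ + (θ ^ (z.length + S))⁻¹)
  have hlamΘ : ENNReal.ofReal lam < Θ ^ S := by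
    rw [← ENNReal.ofReal_pow hθ0.le]
    exact (ENNReal.ofReal_lt_ofReal_iff (pow_pos hθ0 S)).2 hlamθ
  obtain ⟨A, hA_ne_top, hA⟩ := hκ.exists_tsum_pow_length_mul_greenE_le h1 hdiag
    (ENNReal.ofReal_lt_one.2 hθ1) hlamΘ
  refine ⟨D * A, ENNReal.mul_ne_top ENNReal.ofReal_ne_top hA_ne_top, Θ,
    ENNReal.ofReal_lt_one.2 hθ1, fun s hs t => ?_⟩
  calc ‖(G s t).toReal - greenR (Delta z) b s t‖ₑ
      ≤ ∑' u : Word, D * Θ ^ u.length * (G s u * G u t) :=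
        enorm_greenE_sub_greenR_le hp (fun u hu v hv => (hb u v hu hv).1)
          (fun u hu v => hθb.enorm_sub_indicator_le hp h1 h2 hδ hθ0 hθ1.le hC hu v)
          (fun u => hG u t) hs
    _ = D * ∑' u : Word, Θ ^ u.length * (G s u * G u t) := by
        simp_rw [mul_assoc, ENNReal.tsum_mul_left]
    _ ≤ D * (A * Θ ^ lcsLen s t * G s t) := by
        gcongr
        exact hA s t
    _ = D * A * Θ ^ lcsLen s t * G s t := by ring

theorem Perturb.exists_half_greenE_le_greenR (hb : Perturb p b z q C)
    (hp : ∀ s t, 0 ≤ p s t) (hκ : Harnack p κ) (h1 : H1 p S) (h2 : H2 p δ)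
    (hdiag : ∀ n v, P n v v ≤ ENNReal.ofReal lam ^ n) (hlam : lam < 1) (hδ : 0 < δ)
    (hq : q ∈ Set.Ico 0 1) (hC : 0 ≤ C) (hG : ∀ s t, G s t ≠ ∞) :
    ∃ k, ∀ s ∈ Delta z, ∀ t, k ≤ lcsLen s t →
      2⁻¹ * (G s t).toReal ≤ greenR (Delta z) b s t := by
  obtain ⟨A, hA, θ, hθ, herr⟩ :=
    hb.exists_enorm_greenE_sub_greenR_le hp hκ h1 h2 hdiag hlam hδ hq hC hG
  have htendsto := ENNReal.Tendsto.const_mul (ENNReal.tendsto_pow_atTop_nhds_zero_of_lt_one hθ)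
    (Or.inr hA)
  rw [mul_zero] at htendsto
  obtain ⟨k, hk⟩ := (htendsto.eventually_lt_const (u := 2⁻¹) (by simp)).exists
  refine ⟨k, fun s hs t hst => ?_⟩
  have hhalf : ‖(G s t).toReal - greenR (Delta z) b s t‖ₑ ≤ 2⁻¹ * G s t :=
    calc ‖(G s t).toReal - greenR (Delta z) b s t‖ₑ
        ≤ A * θ ^ lcsLen s t * G s t := herr s hs t
      _ ≤ A * θ ^ k * G s t := by
          gcongr A * ?_ * _
          exact pow_le_pow_right_of_le_one' hθ.le hst
      _ ≤ 2⁻¹ * G s t := by gcongr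
  have habs := ENNReal.toReal_mono (ENNReal.mul_ne_top (by simp) (hG s t)) hhalf
  rw [toReal_enorm, Real.norm_eq_abs, ENNReal.toReal_mul, ENNReal.toReal_inv,
    ENNReal.toReal_ofNat] at habs
  linarith [le_abs_self ((G s t).toReal - greenR (Delta z) b s t)]

lemma Harnack.exists_pos_mul_greenE_nil_le (hκ : Harnack p κ) (hG : ∀ s t, G s t ≠ ∞) (s : Word) :
    ∃ c > 0, ∀ t, c * (G [] t).toReal ≤ (G s t).toReal := by
  have hpow_ne_top : κ ^ s.length ≠ ∞ := ENNReal.pow_ne_top hκ.ne_top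
  have hpow_pos : 0 < (κ ^ s.length).toReal :=
    ENNReal.toReal_pos (pow_ne_zero _ (zero_lt_one.trans_le hκ.one_le).ne') hpow_ne_top
  refine ⟨((κ ^ s.length).toReal)⁻¹, inv_pos.2 hpow_pos, fun t => ?_⟩
  have hle : G [] t ≤ κ ^ s.length * G s t := by
    simpa only [List.append_nil] using
      apply_le_pow_mul_append (fun s s' hss' => hκ.left hss' t) s []
  rw [inv_mul_le_iff₀ hpow_pos, ← ENNReal.toReal_mul]
  exact ENNReal.toReal_mono (ENNReal.mul_ne_top hpow_ne_top (hG s t)) hle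

end PerturbedGreen

lemma length_endWord (ω : ℕ → Bool) (k : ℕ) : (endWord ω k).length = k := by
  simp [endWord]

lemma endWord_succ (ω : ℕ → Bool) (k : ℕ) : endWord ω (k + 1) = ω k :: endWord ω k := by
  simp [endWord, List.range_succ]

lemma endWord_suffix_endWord (ω : ℕ → Bool) {k l : ℕ} (hkl : k ≤ l) :
    endWord ω k <:+ endWord ω l := by
  induction l, hkl using Nat.le_induction with
  | base => exact List.suffix_rfl
  | succ l _ ih =>
    rw [endWord_succ]
    exact ih.trans (List.suffix_cons _ _)

theorem prop_3_5_general (p : Word → Word → ℝ) (hp : ∀ s t, 0 ≤ p s t)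
    (S : ℕ) (δ₀ : ℝ) (hδ₀ : δ₀ ∈ Set.Ioc (0 : ℝ) 1) (K : ℕ)
    (m : Word → ℝ) (lam : ℝ) (hlam : lam ∈ Set.Ico (0 : ℝ) 1)
    (h1 : H1 p S) (h2 : H2 p δ₀) (h3 : H3 p δ₀ K) (h4 : H4 p m lam)
    (z : Word) (q C : ℝ) (hq : q ∈ Set.Ico (0 : ℝ) 1) (hC : 0 ≤ C)
    (b : Word → Word → ℝ) (hb : Perturb p b z q C) (ω : ℕ → Bool) (hω : endWord ω z.length = z) :
    ∃ k, z.length ≤ k ∧ ∀ s ∈ Delta (endWord ω k),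
      ∃ c > (0 : ℝ), ∃ l, z.length ≤ l ∧
        ∀ t ∈ Delta (endWord ω l),
          c * (greenE Set.univ p [] t).toReal ≤ greenR (Delta z) b s t := by
  have hκ := h3.harnack hδ₀.1 hδ₀.2
  have hdiag := h4.2.nStepE_self_le h4.1 hlam.1 hp h1.finite_support
  have hG := hκ.greenE_ne_top fun v => ne_top_of_le_ne_top
    (ENNReal.inv_ne_top.2 (tsub_pos_of_lt (ENNReal.ofReal_lt_one.2 hlam.2)).ne')
    (greenE_self_le_of_nStepE_le fun n => hdiag n v)
  obtain ⟨k, hk⟩ :=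
    hb.exists_half_greenE_le_greenR hp hκ h1 h2 hdiag hlam.2 hδ₀.1 hq hC hG
  set l := max k z.length
  have hzl : z.length ≤ l := le_max_right _ _
  refine ⟨l, hzl, fun s hs => ?_⟩
  obtain ⟨c, hc, hcG⟩ := hκ.exists_pos_mul_greenE_nil_le hG s
  refine ⟨2⁻¹ * c, by positivity, l, hzl, fun t ht => ?_⟩
  have hzs : s ∈ Delta z := (hω ▸ endWord_suffix_endWord ω hzl).trans hs
  have hkl : k ≤ lcsLen s t := (le_max_left _ _).trans
    ((length_endWord ω l).symm.trans_le (length_le_lcsLen hs ht))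
  calc 2⁻¹ * c * (greenE Set.univ p [] t).toReal
      = 2⁻¹ * (c * (greenE Set.univ p [] t).toReal) := mul_assoc _ _ _
    _ ≤ 2⁻¹ * (greenE Set.univ p s t).toReal := by
        gcongr
        exact hcG t
    _ ≤ greenR (Delta z) b s t := hk s hzs t hkl

/-- Proposition 3.5: for a substochastic kernel `p` satisfying (H1)–(H4) and a
`q`-perturbation `b` of `p` on `Δ_z`, the boundary value at any end `ω` in the closure of
`Δ_z` of the Martin-type kernel `G_b(s,·)/G_p(e,·)` is strictly positive for all `s`
sufficiently close to `ω`. -/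
theorem prop_3_5 (p : Word → Word → ℝ) (hp : ∀ s t, 0 ≤ p s t) (hsub : Substochastic p)
    (S : ℕ) (δ₀ : ℝ) (hδ₀ : δ₀ ∈ Set.Ioo (0 : ℝ) 1) (K : ℕ)
    (m : Word → ℝ) (lam : ℝ) (hlam : lam ∈ Set.Ioo (0 : ℝ) 1)
    (h1 : H1 p S) (h2 : H2 p δ₀) (h3 : H3 p δ₀ K) (h4 : H4 p m lam)
    (z : Word) (q C : ℝ) (hq : q ∈ Set.Ioo (0 : ℝ) 1) (hC : 0 < C)
    (b : Word → Word → ℝ) (hb : Perturb p b z q C) :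
    ∀ ω : ℕ → Bool, endWord ω z.length = z →
      ∃ k, z.length ≤ k ∧ ∀ s ∈ Delta (endWord ω k),
        ∃ c > (0 : ℝ), ∃ l, z.length ≤ l ∧
          ∀ t ∈ Delta (endWord ω l),
            c * (greenE Set.univ p [] t).toReal ≤ greenR (Delta z) b s t := by
  exact prop_3_5_general p hp S δ₀ (Set.Ioo_subset_Ioc_self hδ₀) K m lam
    (Set.Ioo_subset_Ico_self hlam) h1 h2 h3 h4 z q C (Set.Ioo_subset_Ico_self hq) hC.le b hb

end Paper
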